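/- (Proposition 2: from weak to uniformly strong satisfaction, per trajectory.) Assume w is uniformly continuous on [0,∞) and let ε > 0. Suppose the pair (w, y) weakly satisfies the relaxed contract (B_ε(A), G): for every t ≥ 0, if w(s) ∈ B_ε(A)(s) for all s ∈ [0,t], then y(s) ∈ G(s) for all s ∈ [0,t]. Then (w, y) uniformly strongly satisfies the contract (A, G): there exists δ > 0 such that for every t ≥ 0, if w(s) ∈ A(s) for all s ∈ [0,t], then y(s) ∈ G(s) for all s ∈ [0, t+δ]. -/

import Mathlib

open Set

/-- The trajectory `x` lies in the time-varying set `S` throughout `[0, t]`. Trajectories are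
functions on all of `ℝ`, of which only the restriction to `[0, ∞)` matters. -/
def StaysInUpTo {X : Type*} (x : ℝ → X) (S : ℝ → Set X) (t : ℝ) : Prop :=
  ∀ s ∈ Icc (0 : ℝ) t, x s ∈ S s

/-- The `ε`-expansion `B_ε(A)`, which relaxes the assumption `A` by `ε` both in time and in
space. The nearby time is required to be nonnegative because `A` is only meaningful on `[0, ∞)`. -/
def timeSpaceExpansion {W : Type*} [PseudoMetricSpace W] (ε : ℝ) (A : ℝ → Set W) (t : ℝ) :
    Set W :=
  {z | ∃ t' : ℝ, 0 ≤ t' ∧ |t' - t| ≤ ε ∧ ∃ a ∈ A t', dist z a ≤ ε}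

/-- Weak satisfaction of the contract `(A, G)` by the input-output pair `(w, y)`: the guarantee
holds for as long as the assumption does. -/
def WeaklySatisfies {W Y : Type*} (w : ℝ → W) (y : ℝ → Y) (A : ℝ → Set W) (G : ℝ → Set Y) :
    Prop :=
  ∀ t : ℝ, 0 ≤ t → StaysInUpTo w A t → StaysInUpTo y G t

/-- Uniformly strong satisfaction of the contract `(A, G)` by the input-output pair `(w, y)`: the
guarantee outlasts the assumption by some `δ > 0` that does not depend on the time. -/
def UniformlyStronglySatisfies {W Y : Type*} (w : ℝ → W) (y : ℝ → Y) (A : ℝ → Set W)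
    (G : ℝ → Set Y) : Prop :=
  ∃ δ : ℝ, 0 < δ ∧ ∀ t : ℝ, 0 ≤ t → StaysInUpTo w A t → StaysInUpTo y G (t + δ)

section UniformContinuity

variable {W : Type*} [PseudoMetricSpace W] {w : ℝ → W} {ε : ℝ}

theorem exists_forall_mem_timeSpaceExpansion_of_abs_sub_le
    (hw : UniformContinuousOn w (Ici 0)) (hε : 0 < ε) :
    ∃ δ : ℝ, 0 < δ ∧ ∀ (A : ℝ → Set W) (r s : ℝ), 0 ≤ r → 0 ≤ s → |r - s| ≤ δ →
      w r ∈ A r → w s ∈ timeSpaceExpansion ε A s := by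
  obtain ⟨δ, hδ, hw_dist⟩ := Metric.uniformContinuousOn_iff_le.1 hw ε hε
  refine ⟨min ε δ, lt_min hε hδ, fun A r s hr hs hrs hwr ↦ ?_⟩
  have hdist : dist (w s) (w r) ≤ ε := by
    rw [dist_comm]
    exact hw_dist r hr s hs (hrs.trans (min_le_right ε δ))
  exact ⟨r, hr, hrs.trans (min_le_left ε δ), w r, hwr, hdist⟩

theorem exists_forall_staysInUpTo_timeSpaceExpansion_add
    (hw : UniformContinuousOn w (Ici 0)) (hε : 0 < ε) :
    ∃ δ : ℝ, 0 < δ ∧ ∀ (A : ℝ → Set W) (t : ℝ), 0 ≤ t →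
      StaysInUpTo w A t → StaysInUpTo w (timeSpaceExpansion ε A) (t + δ) := by
  obtain ⟨δ, hδ, hexp⟩ := exists_forall_mem_timeSpaceExpansion_of_abs_sub_le hw hε
  refine ⟨δ, hδ, fun A t ht hA s ⟨hs, hst⟩ ↦ ?_⟩
  -- Compare `s` with the last time up to `s` at which `A` is known to hold.
  have hmin : 0 ≤ min s t := le_min hs ht
  have hclose : |min s t - s| ≤ δ := by
    rw [abs_sub_comm, abs_of_nonneg (sub_nonneg.2 (min_le_left s t)), sub_le_comm]
    exact le_min (by linarith) (by linarith)
  exact hexp A (min s t) s hmin hs hclose (hA _ ⟨hmin, min_le_right s t⟩)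

theorem weak_to_uniform_strong_general {Y : Type*} {y : ℝ → Y} {A : ℝ → Set W} {G : ℝ → Set Y}
    (hw : UniformContinuousOn w (Ici 0)) (hε : 0 < ε)
    (hweak : WeaklySatisfies w y (timeSpaceExpansion ε A) G) :
    UniformlyStronglySatisfies w y A G := by
  obtain ⟨δ, hδ, hexp⟩ := exists_forall_staysInUpTo_timeSpaceExpansion_add hw hε
  exact ⟨δ, hδ, fun t ht hA ↦ hweak (t + δ) (by linarith) (hexp A t ht hA)⟩

end UniformContinuity

/-- Proposition 2: from weak to uniformly strong satisfaction (per trajectory).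
If `w` is uniformly continuous on `[0,∞)` and the pair `(w, y)` weakly satisfies the
relaxed contract `(B_ε(A), G)` for some `ε > 0`, then `(w, y)` uniformly strongly
satisfies the contract `(A, G)`. -/
theorem weak_to_uniform_strong
    {W : Type*} [MetricSpace W] {Y : Type*}
    (w : ℝ → W) (y : ℝ → Y)
    (A : ℝ → Set W) (G : ℝ → Set Y)
    (hw : UniformContinuousOn w (Set.Ici 0))
    (ε : ℝ) (hε : 0 < ε)
    (hweak : ∀ t : ℝ, 0 ≤ t →
      (∀ s ∈ Set.Icc (0:ℝ) t,
        w s ∈ {z : W | ∃ t' : ℝ, 0 ≤ t' ∧ |t' - s| ≤ ε ∧ ∃ a ∈ A t', dist z a ≤ ε}) →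
      ∀ s ∈ Set.Icc (0:ℝ) t, y s ∈ G s) :
    ∃ δ : ℝ, 0 < δ ∧ ∀ t : ℝ, 0 ≤ t →
      (∀ s ∈ Set.Icc (0:ℝ) t, w s ∈ A s) →
      ∀ s ∈ Set.Icc (0:ℝ) (t + δ), y s ∈ G s :=
  weak_to_uniform_strong_general hw hε hweak
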